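/- Let 0 < α < 1 and δ > 0. For ε > 0 define ψ^{ε,δ}: ℝ³ → ℝ by ψ^{ε,δ}(x) = |x|^{-α} for |x| ≤ 1, ψ^{ε,δ}(x) = |x|^{-1}(1 − ε^δ(|x|²−1)^δ) for 1 ≤ |x|² ≤ 1 + 1/ε, and ψ^{ε,δ}(x) = 0 for |x|² ≥ 1 + 1/ε. Let H[f] := (2π²)^{-1} ∫_{ℝ³} ∫_{ℝ³} |v(x) − v(y)|² / |x−y|⁴ · |x|^{-1}|y|^{-1} dx dy where v(x) := |x| f(x) (the ground-state representation of the Hardy-subtracted quadratic form for d = 3, s = 1/2). Then lim_{ε→0} H[ψ^{ε,δ}] = 4 ( ψ(3/2 − α/2) + ψ(1+δ) − 2 ψ(1) ), where ψ = Γ'/Γ is the digamma function. -/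

import Mathlib

open MeasureTheory Real Set

noncomputable section

/-- The digamma function `ψ = Γ'/Γ`. -/
def digamma (x : ℝ) : ℝ := deriv Real.Gamma x / Real.Gamma x

/-- The ground-state representation of the Hardy-subtracted quadratic form for
`d = 3`, `s = 1/2`: `H[f] = (2π²)^{-1} ∫∫ |v(x)−v(y)|²/|x−y|⁴ · |x|^{-1}|y|^{-1} dx dy`
with `v(x) = |x| f(x)`. -/
def Hform (f : EuclideanSpace ℝ (Fin 3) → ℝ) : ℝ :=
  (2 * Real.pi ^ 2)⁻¹ * ∫ x : EuclideanSpace ℝ (Fin 3), ∫ y : EuclideanSpace ℝ (Fin 3),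
    (‖x‖ * f x - ‖y‖ * f y) ^ 2 / ‖x - y‖ ^ 4 * ‖x‖⁻¹ * ‖y‖⁻¹

/-- The trial function `ψ^{ε,δ}`. -/
def psiTrial (α δ ε : ℝ) (x : EuclideanSpace ℝ (Fin 3)) : ℝ :=
  if ‖x‖ ≤ 1 then ‖x‖ ^ (-α)
  else if ‖x‖ ^ 2 ≤ 1 + 1 / ε then ‖x‖⁻¹ * (1 - ε ^ δ * (‖x‖ ^ 2 - 1) ^ δ)
  else 0

theorem sub_eq_sub_of_monotoneOn_of_add_one {f g : ℝ → ℝ} (hf : MonotoneOn f (Ici 0))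
    (hg : MonotoneOn g (Ici 0)) (hf1 : ∀ x, 0 ≤ x → f (x + 1) = f x + 1 / (x + 1))
    (hg1 : ∀ x, 0 ≤ x → g (x + 1) = g x + 1 / (x + 1)) {x : ℝ} (hx : 0 ≤ x) :
    f x - f 0 = g x - g 0 := by
  -- `f - g` is `1`-periodic
  have hper : ∀ (n : ℕ) (y : ℝ), 0 ≤ y → f (y + n) - g (y + n) = f y - g y := by
    intro n y hy
    induction n with
    | zero => simp
    | succ k ih =>
      have hk : (0 : ℝ) ≤ y + k := by positivity
      have h1 := hf1 _ hk
      have h2 := hg1 _ hk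
      push_cast
      rw [← add_assoc, h1, h2]
      linarith
  obtain ⟨N, hN⟩ := exists_nat_ge x
  have hincr : ∀ h : ℝ → ℝ, MonotoneOn h (Ici 0) →
      (∀ x, 0 ≤ x → h (x + 1) = h x + 1 / (x + 1)) → ∀ n : ℕ,
      0 ≤ h (x + n) - h n ∧ h (x + n) - h n ≤ N / (n + 1) := by
    intro h hm h1 n
    have hb : ∀ M : ℕ, h (n + M) - h n ≤ M / (n + 1) := by
      intro M
      induction M with
      | zero => simp
      | succ k ih =>
        have h2 := h1 (n + k) (by positivity)
        have h3 : (1 : ℝ) / (n + k + 1) ≤ 1 / (n + 1) := by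
          apply one_div_le_one_div_of_le (by positivity)
          have : (0 : ℝ) ≤ k := by positivity
          linarith
        push_cast
        rw [← add_assoc, h2, add_div]
        linarith
    have hn : (n : ℝ) ∈ Ici (0 : ℝ) := by simp
    have hxn : x + n ∈ Ici (0 : ℝ) := by simp only [mem_Ici]; positivity
    have hNn : (n : ℝ) + N ∈ Ici (0 : ℝ) := by simp only [mem_Ici]; positivity
    constructor
    · linarith [hm hn hxn (by linarith)]
    · linarith [hm hxn hNn (by linarith), hb N]
  have hlim : Filter.Tendsto (fun n : ℕ => (N : ℝ) / (n + 1)) Filter.atTop (nhds 0) := by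
    have := (tendsto_one_div_add_atTop_nhds_zero_nat (𝕜 := ℝ)).const_mul (N : ℝ)
    simpa [div_eq_mul_inv] using this
  have hsq : ∀ h : ℝ → ℝ, MonotoneOn h (Ici 0) →
      (∀ x, 0 ≤ x → h (x + 1) = h x + 1 / (x + 1)) →
      Filter.Tendsto (fun n : ℕ => h (x + n) - h n) Filter.atTop (nhds 0) := fun h hm h1 =>
    squeeze_zero (fun n => (hincr h hm h1 n).1) (fun n => (hincr h hm h1 n).2) hlim
  have h0 := (hsq f hf hf1).sub (hsq g hg hg1)
  have hc : ∀ n : ℕ, (f (x + n) - f n) - (g (x + n) - g n) = (f x - f 0) - (g x - g 0) := by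
    intro n
    have h1 := hper n x hx
    have h2 := hper n 0 le_rfl
    rw [zero_add] at h2
    linarith
  simp_rw [hc] at h0
  have := tendsto_nhds_unique h0 tendsto_const_nhds
  linarith

theorem differentiableAt_Gamma_of_pos {x : ℝ} (hx : 0 < x) : DifferentiableAt ℝ Real.Gamma x :=
  Real.differentiableAt_Gamma fun m => by
    have : (0 : ℝ) ≤ m := by positivity
    linarith

theorem digamma_add_one {x : ℝ} (hx : 0 < x) : digamma (x + 1) = digamma x + 1 / x := by
  have hG := (Real.Gamma_pos_of_pos hx).ne'
  have h1 : HasDerivAt (fun y => Real.Gamma (y + 1)) (deriv Real.Gamma (x + 1)) x :=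
    (differentiableAt_Gamma_of_pos (by linarith)).hasDerivAt.comp_add_const x 1
  have h2 : HasDerivAt (fun y => y * Real.Gamma y) (1 * Real.Gamma x + x * deriv Real.Gamma x) x :=
    (hasDerivAt_id x).mul (differentiableAt_Gamma_of_pos hx).hasDerivAt
  have h3 : (fun y => Real.Gamma (y + 1)) =ᶠ[nhds x] fun y => y * Real.Gamma y := by
    filter_upwards [lt_mem_nhds hx] with y hy using Real.Gamma_add_one hy.ne'
  have h4 := (h2.congr_of_eventuallyEq h3).unique h1
  rw [digamma, digamma, ← h4, Real.Gamma_add_one hx.ne']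
  field_simp
  ring

theorem monotoneOn_digamma : MonotoneOn digamma (Ioi 0) := by
  have hd : ∀ x ∈ Ioi (0 : ℝ), HasDerivAt (Real.log ∘ Real.Gamma) (digamma x) x := fun x hx =>
    (differentiableAt_Gamma_of_pos hx).hasDerivAt.log (Real.Gamma_pos_of_pos hx).ne'
  exact (Real.convexOn_log_Gamma.monotoneOn_deriv
    fun x hx => (hd x hx).differentiableAt).congr fun x hx => (hd x hx).deriv

theorem one_sub_rpow_le {p u : ℝ} (hp : 0 ≤ p) (hu : u ∈ Ioo (0 : ℝ) 1) :
    1 - u ^ p ≤ (1 + p) * (1 - u) := by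
  rcases le_total p 1 with h | h
  · have := Real.rpow_le_rpow_of_exponent_ge hu.1 hu.2.le h
    rw [Real.rpow_one] at this
    nlinarith [hu.2]
  · have := one_add_mul_self_le_rpow_one_add (s := u - 1) (by linarith [hu.1]) h
    rw [add_sub_cancel] at this
    nlinarith [hu.2]

theorem rpow_mem_Icc {p u : ℝ} (hp : 0 ≤ p) (hu : u ∈ Ioo (0 : ℝ) 1) : u ^ p ∈ Icc (0 : ℝ) 1 :=
  ⟨Real.rpow_nonneg hu.1.le p, Real.rpow_le_one hu.1.le hu.2.le hp⟩

theorem div_one_sub_mem_Icc {p u : ℝ} (hp : 0 ≤ p) (hu : u ∈ Ioo (0 : ℝ) 1) :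
    (1 - u ^ p) / (1 - u) ∈ Icc (0 : ℝ) (1 + p) := by
  have h1 : 0 < 1 - u := by linarith [hu.2]
  exact ⟨div_nonneg (by linarith [(rpow_mem_Icc hp hu).2]) h1.le,
    (div_le_iff₀ h1).2 (one_sub_rpow_le hp hu)⟩

theorem integrableOn_Ioo_of_le {f : ℝ → ℝ} {C : ℝ} (hf : Measurable f)
    (hb : ∀ u ∈ Ioo (0 : ℝ) 1, f u ∈ Icc 0 C) : IntegrableOn f (Ioo 0 1) :=
  Measure.integrableOn_of_bounded (M := C) (by simp) hf.aestronglyMeasurable <|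
    (ae_restrict_iff' measurableSet_Ioo).2 <| ae_of_all _ fun u hu => by
      rw [Real.norm_of_nonneg (hb u hu).1]; exact (hb u hu).2

theorem integrableOn_one_sub_rpow_div {p : ℝ} (hp : 0 ≤ p) :
    IntegrableOn (fun u : ℝ => (1 - u ^ p) / (1 - u)) (Ioo 0 1) :=
  integrableOn_Ioo_of_le (by fun_prop) fun _ hu => div_one_sub_mem_Icc hp hu

theorem integral_one_sub_rpow_div {p : ℝ} (hp : 0 ≤ p) :
    ∫ u in Ioo (0 : ℝ) 1, (1 - u ^ p) / (1 - u) = digamma (1 + p) - digamma 1 := by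
  have h := sub_eq_sub_of_monotoneOn_of_add_one
    (f := fun p => ∫ u in Ioo (0 : ℝ) 1, (1 - u ^ p) / (1 - u))
    (g := fun p => digamma (1 + p)) ?_ ?_ ?_ ?_ hp
  · simpa using h
  · intro p hp q hq hpq
    refine setIntegral_mono_on (integrableOn_one_sub_rpow_div hp)
      (integrableOn_one_sub_rpow_div hq) measurableSet_Ioo fun u hu => ?_
    have : 0 < 1 - u := by linarith [hu.2]
    have := Real.rpow_le_rpow_of_exponent_ge hu.1 hu.2.le hpq
    gcongr
  · intro p hp q hq hpq
    simp only [mem_Ici] at hp hq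
    exact monotoneOn_digamma (by simp only [mem_Ioi]; linarith) (by simp only [mem_Ioi]; linarith)
      (by linarith)
  · intro p hp
    have h1 : ∫ u in Ioo (0 : ℝ) 1, u ^ p = 1 / (p + 1) := by
      rw [← integral_Ioc_eq_integral_Ioo, ← intervalIntegral.integral_of_le zero_le_one,
        integral_rpow (Or.inl (by linarith))]
      simp [Real.zero_rpow (by linarith : p + 1 ≠ 0)]
    rw [← h1, ← integral_add (integrableOn_one_sub_rpow_div hp)
      (integrableOn_Ioo_of_le (C := 1) (by fun_prop) fun u hu => rpow_mem_Icc hp hu)]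
    refine setIntegral_congr_fun measurableSet_Ioo fun u hu => ?_
    have : 1 - u ≠ 0 := by linarith [hu.2]
    simp only [Real.rpow_add_one hu.1.ne']
    field_simp
    ring
  · intro p hp
    have := digamma_add_one (x := 1 + p) (by linarith)
    rw [← add_assoc, this, add_comm p 1]

theorem one_sub_rpow_sq_div_sq_mem_Icc {p u : ℝ} (hp : 0 ≤ p) (hu : u ∈ Ioo (0 : ℝ) 1) :
    (1 - u ^ p) ^ 2 / (1 - u) ^ 2 ∈ Icc (0 : ℝ) ((1 + p) ^ 2) := by
  rw [← div_pow]
  have h := div_one_sub_mem_Icc hp hu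
  exact ⟨sq_nonneg _, pow_le_pow_left₀ h.1 h.2 2⟩

theorem one_sub_rpow_sq_div_mem_Icc {p u : ℝ} (hp : 0 ≤ p) (hu : u ∈ Ioo (0 : ℝ) 1) :
    (1 - u ^ p) ^ 2 / (1 - u) ∈ Icc (0 : ℝ) (1 + p) := by
  have h := div_one_sub_mem_Icc hp hu
  have h' := rpow_mem_Icc hp hu
  have h1 : (1 - u ^ p) ^ 2 / (1 - u) = (1 - u ^ p) * ((1 - u ^ p) / (1 - u)) := by ring
  rw [h1]
  exact ⟨mul_nonneg (by linarith [h'.2]) h.1, by nlinarith [h.1, h.2, h'.1, h'.2]⟩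

theorem integrableOn_one_sub_rpow_sq_div_sq {p : ℝ} (hp : 0 ≤ p) :
    IntegrableOn (fun u : ℝ => (1 - u ^ p) ^ 2 / (1 - u) ^ 2) (Ioo 0 1) :=
  integrableOn_Ioo_of_le (by fun_prop) fun _ hu => one_sub_rpow_sq_div_sq_mem_Icc hp hu

theorem integrableOn_one_sub_rpow_sq_div {p : ℝ} (hp : 0 ≤ p) :
    IntegrableOn (fun u : ℝ => (1 - u ^ p) ^ 2 / (1 - u)) (Ioo 0 1) :=
  integrableOn_Ioo_of_le (by fun_prop) fun _ hu => one_sub_rpow_sq_div_mem_Icc hp hu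

/-- Integration by parts for `(1 - u ^ p) ^ 2` against the derivative of `u / (1 - u)`. -/
theorem integral_one_sub_rpow_sq_div_sq {p : ℝ} (hp : 0 < p) :
    ∫ u in Ioo (0 : ℝ) 1, (1 - u ^ p) ^ 2 / (1 - u) ^ 2 =
      2 * p * ((∫ u in Ioo (0 : ℝ) 1, (1 - u ^ p) / (1 - u)) -
        ∫ u in Ioo (0 : ℝ) 1, (1 - u ^ p) ^ 2 / (1 - u)) := by
  have hi1 := integrableOn_one_sub_rpow_sq_div_sq hp.le
  have hi2 := integrableOn_one_sub_rpow_div hp.le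
  have hi3 := integrableOn_one_sub_rpow_sq_div hp.le
  have hi4 : IntegrableOn (fun u : ℝ => 2 * p * ((1 - u ^ p) / (1 - u) -
      (1 - u ^ p) ^ 2 / (1 - u))) (Ioo 0 1) := (hi2.sub hi3).const_mul _
  have hb : ∀ u ∈ Ioo (0 : ℝ) 1, 0 ≤ u * (1 - u ^ p) ^ 2 / (1 - u) ∧
      u * (1 - u ^ p) ^ 2 / (1 - u) ≤ (1 + p) * u ∧
      u * (1 - u ^ p) ^ 2 / (1 - u) ≤ (1 + p) ^ 2 * (1 - u) := by
    intro u hu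
    have h1 : 0 < 1 - u := by linarith [hu.2]
    have h2 := one_sub_rpow_sq_div_mem_Icc hp.le hu
    have h3 := one_sub_rpow_sq_div_sq_mem_Icc hp.le hu
    have e1 : u * (1 - u ^ p) ^ 2 / (1 - u) = (1 - u ^ p) ^ 2 / (1 - u) * u := by ring
    have e2 : (1 - u ^ p) ^ 2 / (1 - u) * u =
        (1 - u ^ p) ^ 2 / (1 - u) ^ 2 * (u * (1 - u)) := by field_simp
    refine ⟨e1 ▸ mul_nonneg h2.1 hu.1.le, e1 ▸ mul_le_mul_of_nonneg_right h2.2 hu.1.le, ?_⟩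
    rw [e1, e2]
    have := mul_nonneg hu.1.le h1.le
    exact mul_le_mul h3.2 (by nlinarith [hu.2]) this (by positivity)
  have hmain := intervalIntegral.integral_eq_sub_of_hasDerivAt_of_tendsto (a := (0 : ℝ)) (b := 1)
    (f := fun u => u * (1 - u ^ p) ^ 2 / (1 - u))
    (f' := fun u => (1 - u ^ p) ^ 2 / (1 - u) ^ 2 -
      2 * p * ((1 - u ^ p) / (1 - u) - (1 - u ^ p) ^ 2 / (1 - u)))
    zero_lt_one (fa := 0) (fb := 0) ?_ ?_ ?_ ?_
  · rw [intervalIntegral.integral_of_le zero_le_one, integral_Ioc_eq_integral_Ioo,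
      integral_sub hi1 hi4, integral_const_mul, integral_sub hi2 hi3] at hmain
    linarith
  · intro u hu
    have h1 : 1 - u ≠ 0 := by linarith [hu.2]
    have hr := Real.hasDerivAt_rpow_const (x := u) (p := p) (Or.inl hu.1.ne')
    have := ((hasDerivAt_id u).mul ((hr.const_sub 1).pow 2)).div
      ((hasDerivAt_id u).const_sub 1) h1
    refine this.congr_deriv ?_
    have e : u ^ p = u ^ (p - 1) * u := by
      rw [← Real.rpow_add_one hu.1.ne', sub_add_cancel]
    simp only [id, Pi.pow_apply, Pi.mul_apply, e]
    field_simp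
    ring
  · rw [intervalIntegrable_iff_integrableOn_Ioo_of_le zero_le_one]
    exact hi1.sub hi4
  · have hm : Ioo (0 : ℝ) 1 ∈ nhdsWithin 0 (Ioi 0) := Ioo_mem_nhdsGT zero_lt_one
    refine squeeze_zero' (g := fun u : ℝ => (1 + p) * u)
      (Filter.mem_of_superset hm fun u hu => (hb u hu).1)
      (Filter.mem_of_superset hm fun u hu => (hb u hu).2.1) ?_
    exact tendsto_nhdsWithin_of_tendsto_nhds (Continuous.tendsto' (by fun_prop) _ _ (by simp))
  · have hm : Ioo (0 : ℝ) 1 ∈ nhdsWithin 1 (Iio 1) := Ioo_mem_nhdsLT zero_lt_one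
    refine squeeze_zero' (g := fun u : ℝ => (1 + p) ^ 2 * (1 - u))
      (Filter.mem_of_superset hm fun u hu => (hb u hu).1)
      (Filter.mem_of_superset hm fun u hu => (hb u hu).2.2) ?_
    exact tendsto_nhdsWithin_of_tendsto_nhds (Continuous.tendsto' (by fun_prop) _ _ (by simp))

theorem lintegral_lintegral_eq_two_mul_of_symm {μ : Measure ℝ} [SFinite μ]
    {k : ℝ → ℝ → ENNReal} (hk : Measurable (Function.uncurry k)) (hs : ∀ a b, k a b = k b a)
    (h0 : ∀ a, k a a = 0) :
    ∫⁻ t, ∫⁻ s, k t s ∂μ ∂μ = 2 * ∫⁻ t, ∫⁻ s, (Iio t).indicator (k t) s ∂μ ∂μ := by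
  have hm1 : Measurable (Function.uncurry fun t s => (Iio t).indicator (k t) s) := by
    have : (Function.uncurry fun t s => (Iio t).indicator (k t) s) =
        {q : ℝ × ℝ | q.2 < q.1}.indicator (Function.uncurry k) := by
      ext ⟨a, b⟩; simp [indicator]
    rw [this]
    exact hk.indicator (measurableSet_lt measurable_snd measurable_fst)
  have hm2 : Measurable (Function.uncurry fun t s => (Iio s).indicator (k s) t) :=
    hm1.comp measurable_swap
  have hsplit : ∀ t s, k t s = (Iio t).indicator (k t) s + (Iio s).indicator (k s) t := by
    intro t s
    rcases lt_trichotomy s t with h | h | h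
    · simp [indicator, h, h.not_gt]
    · subst h; simp [h0]
    · simp [indicator, h, h.not_gt, hs t s]
  have hadd : ∀ t, ∫⁻ s, (Iio t).indicator (k t) s + (Iio s).indicator (k s) t ∂μ =
      ∫⁻ s, (Iio t).indicator (k t) s ∂μ + ∫⁻ s, (Iio s).indicator (k s) t ∂μ := fun t =>
    lintegral_add_left (hm1.comp measurable_prodMk_left) _
  have hm3 : Measurable fun t => ∫⁻ s, (Iio t).indicator (k t) s ∂μ := hm1.lintegral_prod_right'
  calc ∫⁻ t, ∫⁻ s, k t s ∂μ ∂μ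
      = ∫⁻ t, (∫⁻ s, (Iio t).indicator (k t) s ∂μ + ∫⁻ s, (Iio s).indicator (k s) t ∂μ) ∂μ :=
        lintegral_congr fun t => by rw [← hadd]; exact lintegral_congr fun s => hsplit t s
    _ = _ := by
        rw [lintegral_add_left hm3, two_mul,
          lintegral_lintegral_swap (f := fun t s => (Iio s).indicator (k s) t) hm2.aemeasurable]

theorem lintegral_Ioo_comp_mul_left {t : ℝ} (ht : 0 < t) (f : ℝ → ENNReal) :
    ∫⁻ s in Ioo 0 t, f s = ENNReal.ofReal t * ∫⁻ u in Ioo 0 1, f (t * u) := by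
  have h := lintegral_image_eq_lintegral_abs_deriv_mul (s := Ioo (0 : ℝ) 1)
    (f := fun u => t * u) (f' := fun _ => t) measurableSet_Ioo
    (fun x _ => by simpa using ((hasDerivAt_id x).const_mul t).hasDerivWithinAt)
    (fun x _ y _ h => mul_left_cancel₀ ht.ne' h) f
  rw [image_mul_left_Ioo ht, mul_zero, mul_one, abs_of_pos ht,
    lintegral_const_mul' _ _ ENNReal.ofReal_ne_top] at h
  exact h

theorem lintegral_Ioo_ofReal_eq {f : ℝ → ℝ} (hi : IntegrableOn f (Ioo 0 1))
    (h0 : ∀ u ∈ Ioo (0 : ℝ) 1, 0 ≤ f u) :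
    ∫⁻ u in Ioo 0 1, ENNReal.ofReal (f u) = ENNReal.ofReal (∫ u in Ioo 0 1, f u) :=
  (ofReal_integral_eq_lintegral_ofReal hi
    ((ae_restrict_iff' measurableSet_Ioo).2 <| ae_of_all _ h0)).symm

theorem lintegral_rpow_sub_rpow_sq_div_sq {p : ℝ} (hp : 0 < p) :
    ∫⁻ t in Ioo (0 : ℝ) 1, ∫⁻ s in Ioo (0 : ℝ) 1,
        ENNReal.ofReal ((t ^ p - s ^ p) ^ 2 / (t - s) ^ 2) =
      ENNReal.ofReal (p⁻¹ * ∫ u in Ioo (0 : ℝ) 1, (1 - u ^ p) ^ 2 / (1 - u) ^ 2) := by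
  set Q := ∫ u in Ioo (0 : ℝ) 1, (1 - u ^ p) ^ 2 / (1 - u) ^ 2 with hQ
  rw [lintegral_lintegral_eq_two_mul_of_symm
    (k := fun t s : ℝ => ENNReal.ofReal ((t ^ p - s ^ p) ^ 2 / (t - s) ^ 2))
    (by unfold Function.uncurry; fun_prop)
    (fun a b => by rw [← neg_sub (b ^ p), ← neg_sub b, neg_sq, neg_sq]) (fun a => by simp)]
  have hinner : ∀ t ∈ Ioo (0 : ℝ) 1, ∫⁻ s in Ioo (0 : ℝ) 1,
      (Iio t).indicator (fun s => ENNReal.ofReal ((t ^ p - s ^ p) ^ 2 / (t - s) ^ 2)) s =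
      ENNReal.ofReal (t ^ (2 * p - 1)) * ENNReal.ofReal Q := by
    intro t ht
    rw [setLIntegral_indicator measurableSet_Iio]
    have : Iio t ∩ Ioo 0 1 = Ioo 0 t := by
      ext s; simp only [mem_inter_iff, mem_Iio, mem_Ioo]
      exact ⟨fun h => ⟨h.2.1, h.1⟩, fun h => ⟨h.2, h.1, h.2.trans ht.2⟩⟩
    rw [this, lintegral_Ioo_comp_mul_left ht.1, hQ,
      ← lintegral_Ioo_ofReal_eq (integrableOn_one_sub_rpow_sq_div_sq hp.le)
        fun u hu => (one_sub_rpow_sq_div_sq_mem_Icc hp.le hu).1,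
      ← lintegral_const_mul' _ _ ENNReal.ofReal_ne_top,
      ← lintegral_const_mul' _ _ ENNReal.ofReal_ne_top]
    refine setLIntegral_congr_fun measurableSet_Ioo fun u hu => ?_
    have h1 : 1 - u ≠ 0 := by linarith [hu.2]
    have ht0 := ht.1.ne'
    rw [← ENNReal.ofReal_mul ht.1.le, ← ENNReal.ofReal_mul (Real.rpow_nonneg ht.1.le _),
      Real.mul_rpow ht.1.le hu.1.le, Real.rpow_sub_one ht0, two_mul, Real.rpow_add ht.1]
    congr 1
    have : t - t * u = t * (1 - u) := by ring
    rw [this]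
    field_simp
  rw [setLIntegral_congr_fun measurableSet_Ioo hinner,
    lintegral_mul_const' _ _ ENNReal.ofReal_ne_top]
  have hpow : ∫⁻ t in Ioo (0 : ℝ) 1, ENNReal.ofReal (t ^ (2 * p - 1)) =
      ENNReal.ofReal (1 / (2 * p)) := by
    rw [lintegral_Ioo_ofReal_eq _ fun u hu => Real.rpow_nonneg hu.1.le _,
      ← integral_Ioc_eq_integral_Ioo, ← intervalIntegral.integral_of_le zero_le_one,
      integral_rpow (Or.inl (by linarith))]
    · have : 2 * p ≠ 0 := by positivity
      simp [Real.zero_rpow this]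
    · rw [← intervalIntegrable_iff_integrableOn_Ioo_of_le zero_le_one]
      exact intervalIntegral.intervalIntegrable_rpow' (by linarith)
  rw [hpow, ← ENNReal.ofReal_mul (by positivity), ← ENNReal.ofReal_ofNat 2,
    ← ENNReal.ofReal_mul (by positivity)]
  congr 1
  field_simp

theorem lintegral_Ioi_one_div_sq {a c : ℝ} (h : a < c) :
    ∫⁻ b in Ioi c, ENNReal.ofReal (1 / (a - b) ^ 2) = ENNReal.ofReal (1 / (c - a)) := by
  have hd : ∀ x ∈ Ici c, HasDerivAt (fun b => (a - b)⁻¹) (1 / (a - x) ^ 2) x := by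
    intro x hx
    have hx' : a - x ≠ 0 := by linarith [mem_Ici.1 hx]
    exact (((hasDerivAt_id x).const_sub a).inv hx').congr_deriv (by simp)
  have hlim : Filter.Tendsto (fun b => (a - b)⁻¹) Filter.atTop (nhds 0) :=
    tendsto_inv_atBot_zero.comp
      (Filter.tendsto_atBot_add_const_left _ a Filter.tendsto_neg_atTop_atBot)
  have hi := integrableOn_Ioi_deriv_of_nonneg' hd (fun x _ => by positivity) hlim
  rw [← ofReal_integral_eq_lintegral_ofReal hi (ae_of_all _ fun x => by positivity),
    integral_Ioi_of_hasDerivAt_of_tendsto' hd hi hlim]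
  congr 1
  rw [zero_sub, ← inv_neg, neg_sub, one_div]

theorem lintegral_one_sub_rpow_sq_div_sq {p : ℝ} (hp : 0 < p) :
    ∫⁻ a in Ioo (0 : ℝ) 1, ∫⁻ b in Ioi (1 : ℝ), ENNReal.ofReal ((a ^ p - 1) ^ 2 / (a - b) ^ 2) =
      ENNReal.ofReal (∫ u in Ioo (0 : ℝ) 1, (1 - u ^ p) ^ 2 / (1 - u)) := by
  rw [← lintegral_Ioo_ofReal_eq (integrableOn_one_sub_rpow_sq_div hp.le)
    fun u hu => (one_sub_rpow_sq_div_mem_Icc hp.le hu).1]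
  refine setLIntegral_congr_fun measurableSet_Ioo fun a ha => ?_
  simp_rw [div_eq_mul_one_div ((a ^ p - 1) ^ 2), ENNReal.ofReal_mul (sq_nonneg (a ^ p - 1))]
  rw [lintegral_const_mul' _ _ ENNReal.ofReal_ne_top, lintegral_Ioi_one_div_sq ha.2,
    ← ENNReal.ofReal_mul (sq_nonneg _)]
  congr 1
  ring

theorem lintegral_Ioi_mul_comp_add_sq (c : ℝ) (f : ℝ → ENNReal) :
    ∫⁻ r in Ioi 0, ENNReal.ofReal (2 * r) * f (c + r ^ 2) = ∫⁻ q in Ioi c, f q := by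
  have him : (fun r : ℝ => c + r ^ 2) '' Ioi 0 = Ioi c := by
    ext q
    simp only [mem_image, mem_Ioi]
    constructor
    · rintro ⟨r, hr, rfl⟩
      have : 0 < r ^ 2 := by positivity
      linarith
    · intro h
      exact ⟨√(q - c), Real.sqrt_pos.2 (by linarith), by
        rw [Real.sq_sqrt (by linarith)]; ring⟩
  have h := lintegral_image_eq_lintegral_abs_deriv_mul (s := Ioi (0 : ℝ))
    (f := fun r => c + r ^ 2) (f' := fun r => 2 * r) measurableSet_Ioi
    (fun x _ => (((hasDerivAt_pow 2 x).const_add c).congr_deriv (by simp)).hasDerivWithinAt)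
    (fun x hx y hy h => by
      simp only [mem_Ioi] at hx hy
      exact (pow_left_inj₀ hx.le hy.le two_ne_zero).1 (add_left_cancel h)) f
  rw [him] at h
  rw [h]
  refine setLIntegral_congr_fun measurableSet_Ioi fun r hr => ?_
  simp only [mem_Ioi] at hr
  rw [abs_of_pos (by positivity)]

theorem lintegral_prod_comp_add_sq (c : ℝ) {f : ℝ → ENNReal} (hf : Measurable f) :
    ∫⁻ p : ℝ × ℝ, f (c + (p.1 ^ 2 + p.2 ^ 2)) = ENNReal.ofReal π * ∫⁻ q in Ioi c, f q := by
  rw [← lintegral_comp_polarCoord_symm, polarCoord_target, Measure.volume_eq_prod,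
    ← Measure.prod_restrict]
  have hr : ∀ p : ℝ × ℝ, (polarCoord.symm p).1 ^ 2 + (polarCoord.symm p).2 ^ 2 = p.1 ^ 2 := by
    intro p
    simp only [polarCoord_symm_apply]
    nlinarith [Real.sin_sq_add_cos_sq p.2]
  simp_rw [hr]
  rw [lintegral_prod _ (by fun_prop)]
  simp only [lintegral_const, Measure.restrict_apply_univ, Real.volume_Ioo, smul_eq_mul]
  rw [lintegral_mul_const _ (by fun_prop), ← lintegral_Ioi_mul_comp_add_sq c]
  simp_rw [ENNReal.ofReal_mul (zero_le_two (α := ℝ)), mul_assoc]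
  rw [lintegral_const_mul _ (by fun_prop), ← mul_assoc, ← ENNReal.ofReal_mul Real.pi_pos.le,
    mul_comm]
  congr 2
  ring

theorem lintegral_euclideanSpace_eq {F : ℝ → ℝ → ENNReal} (hF : Measurable (Function.uncurry F)) :
    ∫⁻ y : EuclideanSpace ℝ (Fin 3), F (y 0) (‖y‖ ^ 2) =
      ENNReal.ofReal π * ∫⁻ q in Ioi 0, ∫⁻ z in Ioo (-√q) (√q), F z q := by
  have hF1 : Measurable fun y : EuclideanSpace ℝ (Fin 3) => F (y 0) (‖y‖ ^ 2) :=
    hF.comp (g := Function.uncurry F) (f := fun y : EuclideanSpace ℝ (Fin 3) => (y 0, ‖y‖ ^ 2))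
      (by fun_prop)
  rw [← (PiLp.volume_preserving_toLp (Fin 3)).lintegral_comp hF1]
  have hF2 : Measurable fun p : ℝ × (Fin 2 → ℝ) => F p.1 (p.1 ^ 2 + (p.2 0 ^ 2 + p.2 1 ^ 2)) :=
    hF.comp (g := Function.uncurry F)
      (f := fun p : ℝ × (Fin 2 → ℝ) => (p.1, p.1 ^ 2 + (p.2 0 ^ 2 + p.2 1 ^ 2))) (by fun_prop)
  have h1 := (volume_preserving_piFinSuccAbove (fun _ : Fin 3 => ℝ) 0).lintegral_comp hF2
  have h2 : ∀ v : Fin 3 → ℝ, F (WithLp.toLp 2 v 0) (‖WithLp.toLp 2 v‖ ^ 2) =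
      F ((MeasurableEquiv.piFinSuccAbove (fun _ : Fin 3 => ℝ) 0) v).1
        (((MeasurableEquiv.piFinSuccAbove (fun _ : Fin 3 => ℝ) 0) v).1 ^ 2 +
        (((MeasurableEquiv.piFinSuccAbove (fun _ : Fin 3 => ℝ) 0) v).2 0 ^ 2 +
        ((MeasurableEquiv.piFinSuccAbove (fun _ : Fin 3 => ℝ) 0) v).2 1 ^ 2)) := by
    intro v
    rw [EuclideanSpace.real_norm_sq_eq, Fin.sum_univ_three, add_assoc]
    rfl
  simp_rw [h2]
  rw [h1, Measure.volume_eq_prod, lintegral_prod _ hF2.aemeasurable]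
  have h3 : ∀ z, ∫⁻ w : Fin 2 → ℝ, F z (z ^ 2 + (w 0 ^ 2 + w 1 ^ 2)) =
      ENNReal.ofReal π * ∫⁻ q, (Ioi (z ^ 2)).indicator (F z) q := by
    intro z
    have hFz : Measurable (F z) := hF.comp measurable_prodMk_left
    rw [lintegral_indicator measurableSet_Ioi, ← lintegral_prod_comp_add_sq _ hFz]
    exact (volume_preserving_finTwoArrow ℝ).lintegral_comp
      (f := fun p : ℝ × ℝ => F z (z ^ 2 + (p.1 ^ 2 + p.2 ^ 2))) (by fun_prop)
  have hF3 : Measurable (Function.uncurry fun z q => (Ioi (z ^ 2)).indicator (F z) q) := by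
    have : (Function.uncurry fun z q => (Ioi (z ^ 2)).indicator (F z) q) =
        {p : ℝ × ℝ | p.1 ^ 2 < p.2}.indicator (Function.uncurry F) := by
      ext ⟨a, b⟩; simp [indicator]
    rw [this]
    exact hF.indicator (measurableSet_lt (by fun_prop) (by fun_prop))
  simp_rw [h3]
  rw [lintegral_const_mul' _ _ ENNReal.ofReal_ne_top, lintegral_lintegral_swap hF3.aemeasurable,
    ← lintegral_indicator measurableSet_Ioi]
  congr 1
  refine lintegral_congr fun q => ?_
  by_cases hq : 0 < q
  · rw [indicator_of_mem (mem_Ioi.2 hq), ← lintegral_indicator measurableSet_Ioo]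
    refine lintegral_congr fun z => ?_
    simp only [indicator, mem_Ioi, mem_Ioo, Real.sq_lt]
  · rw [indicator_of_notMem (by simpa using hq)]
    refine (lintegral_congr fun z => indicator_of_notMem ?_ _).trans lintegral_zero
    simp only [mem_Ioi, not_lt]
    nlinarith [sq_nonneg z]

theorem lintegral_inner_norm_sq (x : EuclideanSpace ℝ (Fin 3)) (F : ℝ → ℝ → ENNReal) :
    ∫⁻ y : EuclideanSpace ℝ (Fin 3), F (inner ℝ x y) (‖y‖ ^ 2) =
      ∫⁻ y : EuclideanSpace ℝ (Fin 3), F (‖x‖ * y 0) (‖y‖ ^ 2) := by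
  set w : EuclideanSpace ℝ (Fin 3) := EuclideanSpace.single 0 ‖x‖ with hw
  have hn : ‖w‖ = ‖x‖ := by simp [hw]
  set e := (Submodule.span ℝ {w - x})ᗮ.reflection with he
  have hex : e w = x := Submodule.reflection_sub hn
  have h := e.measurePreserving.lintegral_comp_emb e.toHomeomorph.measurableEmbedding
    fun y => F (inner ℝ x y) (‖y‖ ^ 2)
  rw [← h]
  refine lintegral_congr fun y => ?_
  rw [e.norm_map]
  nth_rewrite 1 [← hex]
  rw [e.inner_map_map, hw, EuclideanSpace.inner_single_left]
  simp

theorem lintegral_Ioo_one_div_sq {r q : ℝ} (hr : 0 < r) (hq : 0 < q) (h : q ≠ r ^ 2) :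
    ∫⁻ z in Ioo (-√q) (√q), ENNReal.ofReal (1 / (r ^ 2 + q - 2 * (r * z)) ^ 2) =
      ENNReal.ofReal (2 * √q / (r ^ 2 - q) ^ 2) := by
  have hs : 0 < √q := Real.sqrt_pos.2 hq
  have hss : √q ^ 2 = q := Real.sq_sqrt hq.le
  have hne : √q - r ≠ 0 := fun h' => h (by rw [← hss, sub_eq_zero.1 h'])
  have hpos : ∀ z ∈ uIcc (-√q) (√q), 0 < r ^ 2 + q - 2 * (r * z) := by
    intro z hz
    rw [uIcc_of_le (by linarith)] at hz
    have : 0 < (√q - r) ^ 2 := by positivity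
    nlinarith [hz.2]
  have hd : ∀ z ∈ uIcc (-√q) (√q), HasDerivAt
      (fun z => (2 * r)⁻¹ * (r ^ 2 + q - 2 * (r * z))⁻¹) (1 / (r ^ 2 + q - 2 * (r * z)) ^ 2) z := by
    intro z hz
    have := (((((hasDerivAt_id z).const_mul r).const_mul 2).const_sub (r ^ 2 + q)).inv
      (hpos z hz).ne').const_mul (2 * r)⁻¹
    refine this.congr_deriv ?_
    have := (hpos z hz).ne'
    simp only [id]
    field_simp
  have hc : ContinuousOn (fun z => 1 / (r ^ 2 + q - 2 * (r * z)) ^ 2) (uIcc (-√q) (√q)) :=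
    ContinuousOn.div (by fun_prop) (by fun_prop) fun z hz => pow_ne_zero _ (hpos z hz).ne'
  have hi := hc.intervalIntegrable (μ := volume)
  have hint := intervalIntegral.integral_eq_sub_of_hasDerivAt hd hi
  rw [intervalIntegral.integral_of_le (by linarith), integral_Ioc_eq_integral_Ioo] at hint
  rw [intervalIntegrable_iff_integrableOn_Ioo_of_le (by linarith)] at hi
  rw [← ofReal_integral_eq_lintegral_ofReal hi (ae_of_all _ fun z => by positivity), hint]
  congr 1
  have h1 : r ^ 2 + q - 2 * (r * √q) = (√q - r) ^ 2 := by rw [← hss]; simp; ring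
  have h2 : r ^ 2 + q - 2 * (r * -√q) = (√q + r) ^ 2 := by rw [← hss]; simp; ring
  have h3 : (r ^ 2 - q) ^ 2 = (√q - r) ^ 2 * (√q + r) ^ 2 := by
    rw [← mul_pow, ← neg_sq]; congr 1; nlinarith
  rw [h1, h2, h3]
  have : √q + r ≠ 0 := by positivity
  field_simp
  ring

theorem integral_integral_eq_toReal_lintegral {X : Type*} [MeasurableSpace X] {μ : Measure X}
    [SFinite μ] {I : X → X → ℝ} (hI : Measurable (Function.uncurry I)) (h0 : ∀ x y, 0 ≤ I x y)
    (hfin : ∫⁻ x, ∫⁻ y, ENNReal.ofReal (I x y) ∂μ ∂μ ≠ ⊤) :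
    ∫ x, ∫ y, I x y ∂μ ∂μ = (∫⁻ x, ∫⁻ y, ENNReal.ofReal (I x y) ∂μ ∂μ).toReal := by
  have hm : Measurable fun x => ∫⁻ y, ENNReal.ofReal (I x y) ∂μ :=
    hI.ennreal_ofReal.lintegral_prod_right'
  rw [← integral_toReal hm.aemeasurable (ae_lt_top hm hfin)]
  refine integral_congr_ae (ae_of_all _ fun x => ?_)
  exact integral_eq_lintegral_of_nonneg_ae (ae_of_all _ (h0 x))
    (hI.comp measurable_prodMk_left).aestronglyMeasurable

/-- The squared difference quotient of `w`. -/
def diffQuotSq (w : ℝ → ℝ) (p q : ℝ) : ENNReal :=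
  ENNReal.ofReal ((w p - w q) ^ 2 / (p - q) ^ 2)

theorem measurable_diffQuotSq {w : ℝ → ℝ} (hw : Measurable w) :
    Measurable (Function.uncurry (diffQuotSq w)) := by
  unfold diffQuotSq Function.uncurry
  fun_prop

theorem diffQuotSq_comm (w : ℝ → ℝ) (p q : ℝ) : diffQuotSq w p q = diffQuotSq w q p := by
  rw [diffQuotSq, diffQuotSq, ← neg_sub (w q), ← neg_sub q, neg_sq, neg_sq]

theorem lintegral_radial_form_inner {w : ℝ → ℝ} (hw : Measurable w)
    (x : EuclideanSpace ℝ (Fin 3)) :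
    ∫⁻ y : EuclideanSpace ℝ (Fin 3), ENNReal.ofReal
      ((w (‖x‖ ^ 2) - w (‖y‖ ^ 2)) ^ 2 / ‖x - y‖ ^ 4 * ‖x‖⁻¹ * ‖y‖⁻¹) =
    ENNReal.ofReal (2 * π * (√(‖x‖ ^ 2))⁻¹) * ∫⁻ q in Ioi 0, diffQuotSq w (‖x‖ ^ 2) q := by
  rcases eq_or_ne x 0 with rfl | hx
  · simp
  have hr : 0 < ‖x‖ := norm_pos_iff.2 hx
  rw [Real.sqrt_sq hr.le]
  set r := ‖x‖ with hr_def
  set F : ℝ → ℝ → ENNReal := fun t q => ENNReal.ofReal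
    ((w (r ^ 2) - w q) ^ 2 / (r ^ 2 + q - 2 * t) ^ 2 * r⁻¹ * (√q)⁻¹) with hF
  have h1 : ∀ y : EuclideanSpace ℝ (Fin 3), ENNReal.ofReal
      ((w (r ^ 2) - w (‖y‖ ^ 2)) ^ 2 / ‖x - y‖ ^ 4 * r⁻¹ * ‖y‖⁻¹) =
      F (inner ℝ x y) (‖y‖ ^ 2) := by
    intro y
    have : ‖x - y‖ ^ 4 = (r ^ 2 + ‖y‖ ^ 2 - 2 * inner ℝ x y) ^ 2 := by
      rw [show ‖x - y‖ ^ 4 = (‖x - y‖ ^ 2) ^ 2 by ring, norm_sub_sq_real]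
      congr 1
      ring
    rw [hF, this]
    simp only [Real.sqrt_sq (norm_nonneg y)]
  simp_rw [h1]
  rw [lintegral_inner_norm_sq x F, ← hr_def,
    lintegral_euclideanSpace_eq (F := fun z q => F (r * z) q)
      (by unfold Function.uncurry; fun_prop)]
  have hne : ∀ᵐ q : ℝ ∂(volume.restrict (Ioi 0)), q ≠ r ^ 2 :=
    ae_restrict_of_ae (Measure.ae_ne volume _)
  have h2 : ∫⁻ q in Ioi 0, ∫⁻ z in Ioo (-√q) (√q), F (r * z) q =
      ∫⁻ q in Ioi 0, ENNReal.ofReal (2 * r⁻¹) * diffQuotSq w (r ^ 2) q := by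
    refine lintegral_congr_ae ?_
    filter_upwards [hne, ae_restrict_mem measurableSet_Ioi] with q hq hq0
    have hs : 0 < √q := Real.sqrt_pos.2 hq0
    have h3 : ∀ z, F (r * z) q = ENNReal.ofReal ((w (r ^ 2) - w q) ^ 2 * r⁻¹ * (√q)⁻¹) *
        ENNReal.ofReal (1 / (r ^ 2 + q - 2 * (r * z)) ^ 2) := by
      intro z
      rw [← ENNReal.ofReal_mul (by positivity)]
      simp only [hF]
      congr 1
      ring
    simp_rw [h3]
    rw [lintegral_const_mul' _ _ ENNReal.ofReal_ne_top, lintegral_Ioo_one_div_sq hr hq0 hq,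
      diffQuotSq, ← ENNReal.ofReal_mul (by positivity), ← ENNReal.ofReal_mul (by positivity)]
    congr 1
    field_simp
  rw [h2, lintegral_const_mul' _ _ ENNReal.ofReal_ne_top, ← mul_assoc,
    ← ENNReal.ofReal_mul Real.pi_pos.le]
  congr 2
  ring

theorem lintegral_radial_form {w : ℝ → ℝ} (hw : Measurable w) :
    ∫⁻ x : EuclideanSpace ℝ (Fin 3), ∫⁻ y : EuclideanSpace ℝ (Fin 3), ENNReal.ofReal
      ((w (‖x‖ ^ 2) - w (‖y‖ ^ 2)) ^ 2 / ‖x - y‖ ^ 4 * ‖x‖⁻¹ * ‖y‖⁻¹) =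
    ENNReal.ofReal (4 * π ^ 2) * ∫⁻ p in Ioi 0, ∫⁻ q in Ioi 0, diffQuotSq w p q := by
  have hm : Measurable fun p => ∫⁻ q in Ioi 0, diffQuotSq w p q :=
    (measurable_diffQuotSq hw).lintegral_prod_right'
  simp_rw [lintegral_radial_form_inner hw]
  rw [lintegral_euclideanSpace_eq (F := fun _ p => ENNReal.ofReal (2 * π * (√p)⁻¹) *
    ∫⁻ q in Ioi 0, diffQuotSq w p q)
    (((by fun_prop : Measurable fun p : ℝ => ENNReal.ofReal (2 * π * (√p)⁻¹)).mul hm).comp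
      measurable_snd)]
  have h : ∀ p ∈ Ioi (0 : ℝ), ∫⁻ _ in Ioo (-√p) (√p), ENNReal.ofReal (2 * π * (√p)⁻¹) *
      ∫⁻ q in Ioi 0, diffQuotSq w p q =
      ENNReal.ofReal (4 * π) * ∫⁻ q in Ioi 0, diffQuotSq w p q := by
    intro p hp
    have hs : 0 < √p := Real.sqrt_pos.2 hp
    rw [lintegral_const, Measure.restrict_apply_univ, Real.volume_Ioo, mul_comm, ← mul_assoc,
      ← ENNReal.ofReal_mul (by linarith)]
    congr 2
    field_simp
    ring
  rw [setLIntegral_congr_fun measurableSet_Ioi h, lintegral_const_mul' _ _ ENNReal.ofReal_ne_top,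
    ← mul_assoc, ← ENNReal.ofReal_mul Real.pi_pos.le]
  congr 2
  ring

theorem Hform_eq_of_radial {f : EuclideanSpace ℝ (Fin 3) → ℝ} {w : ℝ → ℝ} (hw : Measurable w)
    (hf : ∀ x, x ≠ 0 → ‖x‖ * f x = w (‖x‖ ^ 2))
    (hfin : ∫⁻ p in Ioi 0, ∫⁻ q in Ioi 0, diffQuotSq w p q ≠ ⊤) :
    Hform f = 2 * (∫⁻ p in Ioi 0, ∫⁻ q in Ioi 0, diffQuotSq w p q).toReal := by
  have h1 : ∀ x y : EuclideanSpace ℝ (Fin 3),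
      (‖x‖ * f x - ‖y‖ * f y) ^ 2 / ‖x - y‖ ^ 4 * ‖x‖⁻¹ * ‖y‖⁻¹ =
      (w (‖x‖ ^ 2) - w (‖y‖ ^ 2)) ^ 2 / ‖x - y‖ ^ 4 * ‖x‖⁻¹ * ‖y‖⁻¹ := by
    intro x y
    rcases eq_or_ne x 0 with rfl | hx
    · simp
    rcases eq_or_ne y 0 with rfl | hy
    · simp
    rw [hf x hx, hf y hy]
  simp only [Hform, h1]
  rw [integral_integral_eq_toReal_lintegral (by unfold Function.uncurry; fun_prop)
    (fun x y => by positivity)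
    (by rw [lintegral_radial_form hw]; exact ENNReal.mul_ne_top ENNReal.ofReal_ne_top hfin),
    lintegral_radial_form hw, ENNReal.toReal_mul, ENNReal.toReal_ofReal (by positivity)]
  field_simp
  ring

theorem lintegral_lintegral_Ioi_split {k : ℝ → ℝ → ENNReal}
    (hk : Measurable (Function.uncurry k)) (hs : ∀ a b, k a b = k b a) :
    ∫⁻ p in Ioi 0, ∫⁻ q in Ioi 0, k p q =
      (∫⁻ p in Ioo 0 1, ∫⁻ q in Ioo 0 1, k p q) + (∫⁻ p in Ioi 1, ∫⁻ q in Ioi 1, k p q) +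
        2 * ∫⁻ p in Ioo 0 1, ∫⁻ q in Ioi 1, k p q := by
  have hsplit : ∀ f : ℝ → ENNReal,
      ∫⁻ q in Ioi 0, f q = (∫⁻ q in Ioo 0 1, f q) + ∫⁻ q in Ioi 1, f q := by
    intro f
    rw [← Ioc_union_Ioi_eq_Ioi (zero_le_one (α := ℝ)),
      lintegral_union measurableSet_Ioi Ioc_disjoint_Ioi_same, restrict_Ioo_eq_restrict_Ioc]
  have hm : ∀ s : Set ℝ, Measurable fun p => ∫⁻ q in s, k p q := fun s =>
    hk.lintegral_prod_right'
  have hswap : ∫⁻ p in Ioi 1, ∫⁻ q in Ioo 0 1, k p q = ∫⁻ p in Ioo 0 1, ∫⁻ q in Ioi 1, k p q := by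
    rw [lintegral_lintegral_swap hk.aemeasurable]
    simp_rw [hs]
  rw [hsplit]
  simp_rw [hsplit (k _)]
  rw [lintegral_add_left (hm _), lintegral_add_left (hm _), hswap]
  ring

/-- The limiting outer profile `t ↦ (1 - t ^ δ)₊`. -/
def cutoffProfile (δ t : ℝ) : ℝ := if t ≤ 1 then 1 - t ^ δ else 0

theorem measurable_cutoffProfile (δ : ℝ) : Measurable (cutoffProfile δ) :=
  Measurable.ite measurableSet_Iic (by fun_prop) measurable_const

theorem cutoffProfile_of_le {δ t : ℝ} (h : t ≤ 1) : cutoffProfile δ t = 1 - t ^ δ := if_pos h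

theorem cutoffProfile_of_lt {δ t : ℝ} (h : 1 < t) : cutoffProfile δ t = 0 := if_neg h.not_ge

theorem lintegral_diffQuotSq_cutoffProfile {δ : ℝ} (hδ : 0 < δ) :
    ∫⁻ p in Ioi 0, ∫⁻ q in Ioi 0, diffQuotSq (cutoffProfile δ) p q =
      ENNReal.ofReal (δ⁻¹ * ∫ u in Ioo (0 : ℝ) 1, (1 - u ^ δ) ^ 2 / (1 - u) ^ 2) +
        2 * ENNReal.ofReal (∫ u in Ioo (0 : ℝ) 1, (1 - u ^ δ) ^ 2 / (1 - u)) := by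
  rw [lintegral_lintegral_Ioi_split (measurable_diffQuotSq (measurable_cutoffProfile δ))
    (diffQuotSq_comm _), ← lintegral_rpow_sub_rpow_sq_div_sq hδ,
    ← lintegral_one_sub_rpow_sq_div_sq hδ]
  have h22 : ∫⁻ p in Ioi 1, ∫⁻ q in Ioi 1, diffQuotSq (cutoffProfile δ) p q = 0 := by
    rw [← lintegral_zero (μ := volume.restrict (Ioi (1 : ℝ)))]
    refine setLIntegral_congr_fun measurableSet_Ioi fun p hp => ?_
    rw [← lintegral_zero (μ := volume.restrict (Ioi (1 : ℝ)))]
    refine setLIntegral_congr_fun measurableSet_Ioi fun q hq => ?_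
    simp [diffQuotSq, cutoffProfile_of_lt hp, cutoffProfile_of_lt hq]
  rw [h22, add_zero]
  congr 1
  · refine setLIntegral_congr_fun measurableSet_Ioo fun p hp => ?_
    refine setLIntegral_congr_fun measurableSet_Ioo fun q hq => ?_
    simp only [diffQuotSq, cutoffProfile_of_le hp.2.le, cutoffProfile_of_le hq.2.le]
    congr 2
    ring
  · congr 1
    refine setLIntegral_congr_fun measurableSet_Ioo fun p hp => ?_
    refine setLIntegral_congr_fun measurableSet_Ioi fun q hq => ?_
    simp only [diffQuotSq, cutoffProfile_of_le hp.2.le, cutoffProfile_of_lt hq]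
    congr 2
    ring

/-- The profile of `|x| ψ^{ε,δ}(x)` in the variable `|x| ^ 2`, with `β = (1 - α) / 2`. -/
def trialProfile (β δ ε a : ℝ) : ℝ := if a ≤ 1 then a ^ β else cutoffProfile δ (ε * (a - 1))

theorem measurable_trialProfile (β δ ε : ℝ) : Measurable (trialProfile β δ ε) :=
  Measurable.ite measurableSet_Iic (by fun_prop)
    ((measurable_cutoffProfile δ).comp (by fun_prop))

theorem trialProfile_of_le {β δ ε a : ℝ} (h : a ≤ 1) : trialProfile β δ ε a = a ^ β := if_pos h

theorem trialProfile_of_lt {β δ ε a : ℝ} (h : 1 < a) :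
    trialProfile β δ ε a = cutoffProfile δ (ε * (a - 1)) := if_neg h.not_ge

theorem norm_mul_psiTrial {α δ ε : ℝ} (hε : 0 < ε) {x : EuclideanSpace ℝ (Fin 3)} (hx : x ≠ 0) :
    ‖x‖ * psiTrial α δ ε x = trialProfile ((1 - α) / 2) δ ε (‖x‖ ^ 2) := by
  have hr : 0 < ‖x‖ := norm_pos_iff.2 hx
  by_cases h : ‖x‖ ≤ 1
  · have h2 : ‖x‖ ^ 2 ≤ 1 := pow_le_one₀ hr.le h
    rw [trialProfile_of_le h2, psiTrial, if_pos h, ← Real.rpow_natCast_mul hr.le,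
      sub_eq_add_neg 1 α]
    have : ((2 : ℕ) : ℝ) * ((1 + -α) / 2) = 1 + -α := by push_cast; ring
    rw [this, Real.rpow_add hr, Real.rpow_one]
  · have h2 : 1 < ‖x‖ ^ 2 := one_lt_pow₀ (not_le.1 h) two_ne_zero
    rw [trialProfile_of_lt h2, psiTrial, if_neg h]
    have h3 : ‖x‖ ^ 2 ≤ 1 + 1 / ε ↔ ε * (‖x‖ ^ 2 - 1) ≤ 1 := by
      rw [← sub_le_iff_le_add', le_div_iff₀ hε, mul_comm]
    rw [cutoffProfile, Real.mul_rpow hε.le (by linarith)]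
    simp only [h3]
    split_ifs
    · rw [mul_inv_cancel_left₀ hr.ne']
    · simp

theorem lintegral_Ioi_one_eq {ε : ℝ} (hε : 0 < ε) (f : ℝ → ENNReal) :
    ∫⁻ b in Ioi 1, f b = ENNReal.ofReal ε⁻¹ * ∫⁻ t in Ioi 0, f (ε⁻¹ * t + 1) := by
  have hi : 0 < ε⁻¹ := inv_pos.2 hε
  have h := lintegral_image_eq_lintegral_abs_deriv_mul (s := Ioi (0 : ℝ))
    (f := fun t => ε⁻¹ * t + 1) (f' := fun _ => ε⁻¹) measurableSet_Ioi
    (fun x _ => by simpa using (((hasDerivAt_id x).const_mul ε⁻¹).add_const 1).hasDerivWithinAt)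
    (fun x _ y _ h => mul_left_cancel₀ hi.ne' (add_right_cancel h)) f
  have him : (fun t : ℝ => ε⁻¹ * t + 1) '' Ioi 0 = Ioi 1 := by
    ext b
    simp only [mem_image, mem_Ioi]
    constructor
    · rintro ⟨t, ht, rfl⟩
      linarith [mul_pos hi ht]
    · intro hb
      exact ⟨ε * (b - 1), mul_pos hε (by linarith), by field_simp; ring⟩
  rwa [him, abs_of_pos hi, lintegral_const_mul' _ _ ENNReal.ofReal_ne_top] at h

theorem lintegral_diffQuotSq_trialProfile_outer {β δ ε : ℝ} (hε : 0 < ε) :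
    ∫⁻ p in Ioi 1, ∫⁻ q in Ioi 1, diffQuotSq (trialProfile β δ ε) p q =
      ∫⁻ p in Ioi 0, ∫⁻ q in Ioi 0, diffQuotSq (cutoffProfile δ) p q := by
  rw [lintegral_Ioi_one_eq hε, ← lintegral_const_mul' _ _ ENNReal.ofReal_ne_top]
  refine setLIntegral_congr_fun measurableSet_Ioi fun s hs => ?_
  simp only [mem_Ioi] at hs
  rw [lintegral_Ioi_one_eq hε, ← lintegral_const_mul' _ _ ENNReal.ofReal_ne_top,
    ← lintegral_const_mul' _ _ ENNReal.ofReal_ne_top]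
  refine setLIntegral_congr_fun measurableSet_Ioi fun t ht => ?_
  simp only [mem_Ioi] at ht
  have h : ∀ u : ℝ, 0 < u → trialProfile β δ ε (ε⁻¹ * u + 1) = cutoffProfile δ u := by
    intro u hu
    rw [trialProfile_of_lt (by linarith [mul_pos (inv_pos.2 hε) hu])]
    congr 1
    field_simp
    ring
  rw [diffQuotSq, diffQuotSq, h s hs, h t ht, ← ENNReal.ofReal_mul (by positivity),
    ← ENNReal.ofReal_mul (by positivity)]
  congr 1
  have : ε⁻¹ * s + 1 - (ε⁻¹ * t + 1) = ε⁻¹ * (s - t) := by ring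
  rw [this]
  field_simp

theorem one_sub_cutoffProfile_mem_Icc {δ t : ℝ} (hδ : 0 < δ) (ht : 0 ≤ t) :
    1 - cutoffProfile δ t ∈ Icc 0 (min 1 (t ^ δ)) := by
  have h0 := Real.rpow_nonneg ht δ
  by_cases h : t ≤ 1
  · rw [cutoffProfile_of_le h, sub_sub_cancel]
    exact ⟨h0, le_min (Real.rpow_le_one ht h hδ.le) le_rfl⟩
  · rw [cutoffProfile_of_lt (not_le.1 h), sub_zero]
    exact ⟨zero_le_one, le_min le_rfl (Real.one_le_rpow (not_le.1 h).le hδ.le)⟩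

theorem tendsto_cutoffProfile_zero {δ : ℝ} (hδ : 0 < δ) {c : ℝ} (hc : 0 ≤ c) :
    Filter.Tendsto (fun ε => cutoffProfile δ (ε * c)) (nhdsWithin 0 (Ioi 0)) (nhds 1) := by
  have h1 : Filter.Tendsto (fun ε : ℝ => 1 - cutoffProfile δ (ε * c)) (nhdsWithin 0 (Ioi 0))
      (nhds 0) := by
    refine squeeze_zero' (g := fun ε : ℝ => (ε * c) ^ δ) ?_ ?_ ?_
    · filter_upwards [self_mem_nhdsWithin] with ε hε
      exact (one_sub_cutoffProfile_mem_Icc hδ (mul_nonneg (le_of_lt hε) hc)).1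
    · filter_upwards [self_mem_nhdsWithin] with ε hε
      exact (one_sub_cutoffProfile_mem_Icc hδ (mul_nonneg (le_of_lt hε) hc)).2.trans
        (min_le_right _ _)
    · refine tendsto_nhdsWithin_of_tendsto_nhds (Continuous.tendsto' ?_ _ _ ?_)
      · exact (continuous_id.mul continuous_const).rpow_const fun _ => Or.inr hδ.le
      · simp [Real.zero_rpow hδ.ne']
  simpa using h1.const_sub 1

theorem lintegral_Ioo_one_div_sub_sq {b : ℝ} (hb : 1 < b) :
    ∫⁻ a in Ioo (0 : ℝ) 1, ENNReal.ofReal (1 / (a - b) ^ 2) =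
      ENNReal.ofReal (1 / (b * (b - 1))) := by
  have hne : ∀ a ∈ uIcc (0 : ℝ) 1, b - a ≠ 0 := by
    intro a ha
    rw [uIcc_of_le zero_le_one] at ha
    linarith [ha.2]
  have hd : ∀ a ∈ uIcc (0 : ℝ) 1, HasDerivAt (fun a => (b - a)⁻¹) (1 / (a - b) ^ 2) a := by
    intro a ha
    refine (((hasDerivAt_id a).const_sub b).inv (hne a ha)).congr_deriv ?_
    rw [← neg_sub (b : ℝ) a, neg_sq]
    simp
  have hc : ContinuousOn (fun a => 1 / (a - b) ^ 2) (uIcc (0 : ℝ) 1) :=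
    ContinuousOn.div (by fun_prop) (by fun_prop) fun a ha =>
      pow_ne_zero _ fun h => hne a ha (by linarith)
  have hi := hc.intervalIntegrable (μ := volume)
  have hint := intervalIntegral.integral_eq_sub_of_hasDerivAt hd hi
  rw [intervalIntegral.integral_of_le zero_le_one, integral_Ioc_eq_integral_Ioo] at hint
  rw [intervalIntegrable_iff_integrableOn_Ioo_of_le zero_le_one] at hi
  rw [lintegral_Ioo_ofReal_eq hi fun a _ => by positivity, hint]
  congr 1
  have h1 : b - 1 ≠ 0 := by linarith
  have h2 : b ≠ 0 := by linarith
  rw [sub_zero]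
  field_simp
  ring

theorem lintegral_min_rpow_div_sq_ne_top {δ : ℝ} (hδ : 0 < δ) :
    ∫⁻ a in Ioo (0 : ℝ) 1, ∫⁻ b in Ioi (1 : ℝ),
      ENNReal.ofReal (min 1 ((b - 1) ^ δ) ^ 2 / (a - b) ^ 2) ≠ ⊤ := by
  rw [lintegral_lintegral_swap (by unfold Function.uncurry; fun_prop)]
  have h1 : ∀ b ∈ Ioi (1 : ℝ), ∫⁻ a in Ioo (0 : ℝ) 1,
      ENNReal.ofReal (min 1 ((b - 1) ^ δ) ^ 2 / (a - b) ^ 2) =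
      ENNReal.ofReal (min 1 ((b - 1) ^ δ) ^ 2 / (b * (b - 1))) := by
    intro b hb
    simp_rw [div_eq_mul_one_div (min 1 ((b - 1) ^ δ) ^ 2),
      ENNReal.ofReal_mul (sq_nonneg (min 1 ((b - 1) ^ δ)))]
    rw [lintegral_const_mul' _ _ ENNReal.ofReal_ne_top, lintegral_Ioo_one_div_sub_sq hb]
  rw [setLIntegral_congr_fun measurableSet_Ioi h1,
    ← Ioc_union_Ioi_eq_Ioi (one_le_two (α := ℝ)),
    lintegral_union measurableSet_Ioi Ioc_disjoint_Ioi_same]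
  refine ENNReal.add_ne_top.2 ⟨?_, ?_⟩
  · have hi : IntegrableOn (fun b : ℝ => (b - 1) ^ (2 * δ - 1)) (Ioc 1 2) := by
      rw [← intervalIntegrable_iff_integrableOn_Ioc_of_le one_le_two]
      have := (intervalIntegral.intervalIntegrable_rpow' (a := 0) (b := 1) (r := 2 * δ - 1)
        (by linarith)).comp_sub_right 1
      norm_num at this
      exact this
    refine ((setLIntegral_mono' measurableSet_Ioc fun b hb => ?_).trans_lt
      hi.lintegral_lt_top).ne
    refine ENNReal.ofReal_le_ofReal ?_
    have hb1 : 0 < b - 1 := by linarith [hb.1]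
    have hm : 0 ≤ min 1 ((b - 1) ^ δ) := le_min zero_le_one (Real.rpow_nonneg hb1.le _)
    rw [Real.rpow_sub_one hb1.ne', two_mul, Real.rpow_add hb1, ← sq]
    have hle : b - 1 ≤ b * (b - 1) := by nlinarith [hb.1]
    have := min_le_right 1 ((b - 1) ^ δ)
    gcongr
  · refine ((setLIntegral_mono' (g := fun b : ℝ => ENNReal.ofReal (1 / (1 - b) ^ 2))
      measurableSet_Ioi fun b hb => ?_).trans_lt ?_).ne
    · refine ENNReal.ofReal_le_ofReal ?_
      simp only [mem_Ioi] at hb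
      have hb1 : 0 < b - 1 := by linarith
      have hm : 0 ≤ min 1 ((b - 1) ^ δ) := le_min zero_le_one (Real.rpow_nonneg hb1.le _)
      have hm1 := min_le_left 1 ((b - 1) ^ δ)
      rw [← neg_sub b 1, neg_sq]
      have hle : (b - 1) ^ 2 ≤ b * (b - 1) := by nlinarith
      have hm2 : min 1 ((b - 1) ^ δ) ^ 2 ≤ 1 := pow_le_one₀ hm hm1
      gcongr
    · rw [lintegral_Ioi_one_div_sq one_lt_two]
      exact ENNReal.ofReal_lt_top

theorem tendsto_lintegral_diffQuotSq_trialProfile_cross {β δ : ℝ} (hβ : 0 < β) (hδ : 0 < δ) :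
    Filter.Tendsto
      (fun ε => ∫⁻ p in Ioo 0 1, ∫⁻ q in Ioi 1, diffQuotSq (trialProfile β δ ε) p q)
      (nhdsWithin 0 (Ioi 0))
      (nhds (ENNReal.ofReal (∫ u in Ioo (0 : ℝ) 1, (1 - u ^ β) ^ 2 / (1 - u)))) := by
  rw [← lintegral_one_sub_rpow_sq_div_sq hβ]
  have hprod : ∀ k : ℝ → ℝ → ENNReal, Measurable (Function.uncurry k) →
      ∫⁻ p in Ioo (0 : ℝ) 1, ∫⁻ q in Ioi (1 : ℝ), k p q =
      ∫⁻ z : ℝ × ℝ, k z.1 z.2 ∂((volume.restrict (Ioo (0 : ℝ) 1)).prod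
        (volume.restrict (Ioi (1 : ℝ)))) := fun k hk =>
    (lintegral_prod (fun z : ℝ × ℝ => k z.1 z.2) hk.aemeasurable).symm
  have hA : ∀ᵐ z : ℝ × ℝ ∂((volume.restrict (Ioo (0 : ℝ) 1)).prod
      (volume.restrict (Ioi (1 : ℝ)))), z.1 ∈ Ioo (0 : ℝ) 1 ∧ z.2 ∈ Ioi (1 : ℝ) := by
    rw [Measure.prod_restrict]
    exact ae_restrict_mem (measurableSet_Ioo.prod measurableSet_Ioi)
  have hm1 : Measurable (Function.uncurry fun a b : ℝ =>
      ENNReal.ofReal ((a ^ β - 1) ^ 2 / (a - b) ^ 2)) := by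
    unfold Function.uncurry; fun_prop
  have hm2 : Measurable (Function.uncurry fun a b : ℝ =>
      ENNReal.ofReal (min 1 ((b - 1) ^ δ) ^ 2 / (a - b) ^ 2)) := by
    unfold Function.uncurry; fun_prop
  simp_rw [hprod _ (measurable_diffQuotSq (measurable_trialProfile β δ _))]
  rw [hprod _ hm1]
  refine tendsto_lintegral_filter_of_dominated_convergence
    (fun z => 2 * (ENNReal.ofReal ((z.1 ^ β - 1) ^ 2 / (z.1 - z.2) ^ 2) +
      ENNReal.ofReal (min 1 ((z.2 - 1) ^ δ) ^ 2 / (z.1 - z.2) ^ 2))) ?_ ?_ ?_ ?_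
  · exact Filter.Eventually.of_forall fun ε =>
      measurable_diffQuotSq (measurable_trialProfile β δ ε)
  · filter_upwards [Ioo_mem_nhdsGT (zero_lt_one (α := ℝ))] with ε hε
    filter_upwards [hA] with z hz
    obtain ⟨ha, hb⟩ := hz
    simp only [mem_Ioi] at hb
    have hb1 : 0 ≤ z.2 - 1 := by linarith
    rw [diffQuotSq, trialProfile_of_le ha.2.le, trialProfile_of_lt hb,
      ← ENNReal.ofReal_add (by positivity) (by positivity), ← ENNReal.ofReal_ofNat 2,
      ← ENNReal.ofReal_mul zero_le_two]
    refine ENNReal.ofReal_le_ofReal ?_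
    rw [← add_div, ← mul_div_assoc]
    have h1 := one_sub_cutoffProfile_mem_Icc hδ (mul_nonneg hε.1.le hb1)
    have h2 : (ε * (z.2 - 1)) ^ δ ≤ (z.2 - 1) ^ δ :=
      Real.rpow_le_rpow (mul_nonneg hε.1.le hb1) (by nlinarith [hε.2]) hδ.le
    have h3 : 1 - cutoffProfile δ (ε * (z.2 - 1)) ≤ min 1 ((z.2 - 1) ^ δ) :=
      h1.2.trans (min_le_min le_rfl h2)
    have h4 := pow_le_pow_left₀ h1.1 h3 2
    gcongr
    nlinarith [sq_nonneg (z.1 ^ β - 1 - (1 - cutoffProfile δ (ε * (z.2 - 1))))]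
  · rw [lintegral_const_mul' _ _ ENNReal.ofNat_ne_top,
      lintegral_add_left (by exact hm1), ← hprod _ hm1, ← hprod _ hm2,
      lintegral_one_sub_rpow_sq_div_sq hβ]
    exact ENNReal.mul_ne_top ENNReal.ofNat_ne_top
      (ENNReal.add_ne_top.2 ⟨ENNReal.ofReal_ne_top, lintegral_min_rpow_div_sq_ne_top hδ⟩)
  · filter_upwards [hA] with z hz
    obtain ⟨ha, hb⟩ := hz
    simp only [mem_Ioi] at hb
    simp only [diffQuotSq, trialProfile_of_le ha.2.le, trialProfile_of_lt hb]
    refine ENNReal.tendsto_ofReal (Filter.Tendsto.div_const (Filter.Tendsto.pow ?_ 2) _)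
    exact (tendsto_cutoffProfile_zero hδ (by linarith)).const_sub _

theorem lintegral_diffQuotSq_trialProfile {β δ ε : ℝ} (hβ : 0 < β) (hδ : 0 < δ) (hε : 0 < ε) :
    ∫⁻ p in Ioi 0, ∫⁻ q in Ioi 0, diffQuotSq (trialProfile β δ ε) p q =
      ENNReal.ofReal (β⁻¹ * ∫ u in Ioo (0 : ℝ) 1, (1 - u ^ β) ^ 2 / (1 - u) ^ 2) +
        (ENNReal.ofReal (δ⁻¹ * ∫ u in Ioo (0 : ℝ) 1, (1 - u ^ δ) ^ 2 / (1 - u) ^ 2) +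
          2 * ENNReal.ofReal (∫ u in Ioo (0 : ℝ) 1, (1 - u ^ δ) ^ 2 / (1 - u))) +
        2 * ∫⁻ p in Ioo 0 1, ∫⁻ q in Ioi 1, diffQuotSq (trialProfile β δ ε) p q := by
  rw [lintegral_lintegral_Ioi_split (measurable_diffQuotSq (measurable_trialProfile β δ ε))
    (diffQuotSq_comm _), lintegral_diffQuotSq_trialProfile_outer hε,
    lintegral_diffQuotSq_cutoffProfile hδ, ← lintegral_rpow_sub_rpow_sq_div_sq hβ]
  congr 2
  refine setLIntegral_congr_fun measurableSet_Ioo fun p hp => ?_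
  refine setLIntegral_congr_fun measurableSet_Ioo fun q hq => ?_
  simp only [diffQuotSq, trialProfile_of_le hp.2.le, trialProfile_of_le hq.2.le]

theorem integral_combination_eq_digamma {p : ℝ} (hp : 0 < p) :
    p⁻¹ * (∫ u in Ioo (0 : ℝ) 1, (1 - u ^ p) ^ 2 / (1 - u) ^ 2) +
      2 * (∫ u in Ioo (0 : ℝ) 1, (1 - u ^ p) ^ 2 / (1 - u)) =
      2 * (digamma (1 + p) - digamma 1) := by
  rw [integral_one_sub_rpow_sq_div_sq hp, integral_one_sub_rpow_div hp.le]
  field_simp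
  ring

/-- As `ε → 0+`, `H[ψ^{ε,δ}] → 4(ψ(3/2 − α/2) + ψ(1+δ) − 2ψ(1))`. -/
theorem Hform_trial_limit (α δ : ℝ) (hα0 : 0 < α) (hα1 : α < 1) (hδ : 0 < δ) :
    Filter.Tendsto (fun ε => Hform (psiTrial α δ ε)) (nhdsWithin 0 (Set.Ioi 0))
      (nhds (4 * (digamma (3 / 2 - α / 2) + digamma (1 + δ) - 2 * digamma 1))) := by
  have hβ : 0 < (1 - α) / 2 := by linarith
  set β := (1 - α) / 2 with hβ_def
  have hQ : ∀ p : ℝ, 0 < p →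
      0 ≤ p⁻¹ * ∫ u in Ioo (0 : ℝ) 1, (1 - u ^ p) ^ 2 / (1 - u) ^ 2 := fun p hp =>
    mul_nonneg (inv_nonneg.2 hp.le) (integral_nonneg fun u => by positivity)
  have hK : ∀ p : ℝ, 0 < p → 0 ≤ ∫ u in Ioo (0 : ℝ) 1, (1 - u ^ p) ^ 2 / (1 - u) := fun p hp =>
    setIntegral_nonneg measurableSet_Ioo fun u hu => (one_sub_rpow_sq_div_mem_Icc hp.le hu).1
  have hcross := tendsto_lintegral_diffQuotSq_trialProfile_cross hβ hδ
  have htotal : Filter.Tendsto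
      (fun ε => ∫⁻ p in Ioi 0, ∫⁻ q in Ioi 0, diffQuotSq (trialProfile β δ ε) p q)
      (nhdsWithin 0 (Ioi 0)) (nhds (ENNReal.ofReal
        (2 * (digamma (1 + β) - digamma 1) + 2 * (digamma (1 + δ) - digamma 1)))) := by
    have h := ((ENNReal.Tendsto.const_mul (a := 2) hcross (Or.inr ENNReal.ofNat_ne_top)).const_add
      (ENNReal.ofReal (β⁻¹ * ∫ u in Ioo (0 : ℝ) 1, (1 - u ^ β) ^ 2 / (1 - u) ^ 2) +
        (ENNReal.ofReal (δ⁻¹ * ∫ u in Ioo (0 : ℝ) 1, (1 - u ^ δ) ^ 2 / (1 - u) ^ 2) +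
          2 * ENNReal.ofReal (∫ u in Ioo (0 : ℝ) 1, (1 - u ^ δ) ^ 2 / (1 - u)))))
    have hval : 2 * (digamma (1 + β) - digamma 1) + 2 * (digamma (1 + δ) - digamma 1) =
        (β⁻¹ * ∫ u in Ioo (0 : ℝ) 1, (1 - u ^ β) ^ 2 / (1 - u) ^ 2) +
        ((δ⁻¹ * ∫ u in Ioo (0 : ℝ) 1, (1 - u ^ δ) ^ 2 / (1 - u) ^ 2) +
          2 * ∫ u in Ioo (0 : ℝ) 1, (1 - u ^ δ) ^ 2 / (1 - u)) +
        2 * ∫ u in Ioo (0 : ℝ) 1, (1 - u ^ β) ^ 2 / (1 - u) := by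
      rw [← integral_combination_eq_digamma hβ, ← integral_combination_eq_digamma hδ]
      ring
    have hQβ := hQ β hβ
    have hQδ := hQ δ hδ
    have hKβ := hK β hβ
    have hKδ := hK δ hδ
    rw [hval, ENNReal.ofReal_add (by positivity) (by positivity),
      ENNReal.ofReal_add hQβ (by positivity), ENNReal.ofReal_add hQδ (by positivity),
      ENNReal.ofReal_mul zero_le_two, ENNReal.ofReal_mul zero_le_two, ENNReal.ofReal_ofNat]
    refine h.congr' ?_
    filter_upwards [self_mem_nhdsWithin] with ε hε
    exact (lintegral_diffQuotSq_trialProfile hβ hδ hε).symm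
  have hnn : 0 ≤ 2 * (digamma (1 + β) - digamma 1) + 2 * (digamma (1 + δ) - digamma 1) := by
    rw [← integral_combination_eq_digamma hβ, ← integral_combination_eq_digamma hδ]
    linarith [hQ β hβ, hQ δ hδ, hK β hβ, hK δ hδ]
  have hreal := ((ENNReal.tendsto_toReal ENNReal.ofReal_ne_top).comp htotal).const_mul 2
  rw [ENNReal.toReal_ofReal hnn] at hreal
  have hlim : 4 * (digamma (3 / 2 - α / 2) + digamma (1 + δ) - 2 * digamma 1) =
      2 * (2 * (digamma (1 + β) - digamma 1) + 2 * (digamma (1 + δ) - digamma 1)) := by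
    rw [show 3 / 2 - α / 2 = 1 + β by rw [hβ_def]; ring]
    ring
  rw [hlim]
  refine hreal.congr' ?_
  filter_upwards [self_mem_nhdsWithin, htotal.eventually_lt_const ENNReal.ofReal_lt_top]
    with ε hε hfin
  exact (Hform_eq_of_radial (measurable_trialProfile β δ ε)
    (fun x hx => norm_mul_psiTrial hε hx) hfin.ne).symm
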